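/- arXiv:2502.16009 — 2 statements merged into one kernel-verified Lean document; each statement's English description precedes it below -/
import Mathlib

section
/- The number of monic degree-three polynomials over F_q with constant term -1 that have three distinct roots in F_q equals ((q-1)(q-2) - 2((q-1) - gcd(3,q-1)))/6. -/
open Polynomial

/-!
A polynomial `∏ a ∈ s, (X - C a)` with unit constant term is determined by its set `s` of roots,
which are units, and its constant term is the product of `s` up to sign; so one counts the
`3`-element subsets of a finite commutative group of order `N` with a given product `g`.
Each of them arises from `6` ordered pairs `(a, b)`, the third element being `g / (a * b)`.
Of the `N * (N - 1)` ordered pairs with `a ≠ b`, the ones lost are those whose third element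
coincides with `a` or with `b`. These two events exclude each other, and the first one leaves
`b = g / a ^ 2`, which differs from `a` exactly when `a ^ 3 ≠ g`. For `g = 1` and a cyclic group,
`a ^ 3 = g` has `gcd 3 N` solutions.
-/

theorem card_pow_eq_one_eq_gcd (G : Type*) [CommGroup G] [Finite G] [IsCyclic G] (n : ℕ) :
    Nat.card {x : G // x ^ n = 1} = Nat.gcd n (Nat.card G) := by
  rw [Nat.gcd_comm, ← IsCyclic.card_powMonoidHom_ker]
  rfl

section SubsetsWithProd

open Finset

variable {G : Type*} [CommGroup G] [DecidableEq G]

theorem erase_erase_eq_singleton_div {s : Finset G} {a b : G} (hs : #s = 3)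
    (hab : (a, b) ∈ s.offDiag) : (s.erase a).erase b = {(∏ x ∈ s, x) / (a * b)} := by
  obtain ⟨ha, hb, hne⟩ := mem_offDiag.1 hab
  have hb' : b ∈ s.erase a := mem_erase.2 ⟨hne.symm, hb⟩
  obtain ⟨c, hc⟩ : ∃ c, (s.erase a).erase b = {c} := by
    rw [← card_eq_one, card_erase_of_mem hb', card_erase_of_mem ha, hs]
  have hprod : ∏ x ∈ s, x = a * b * c := by
    rw [← mul_prod_erase s _ ha, ← mul_prod_erase _ _ hb', hc, prod_singleton, mul_assoc]
  rw [hprod, mul_div_cancel_left, hc]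

variable [Fintype G]

/-- The `n`-element subsets of `G` with product `g`. -/
def subsetsWithProd (n : ℕ) (g : G) : Finset (Finset G) :=
  {s ∈ powersetCard n univ | ∏ x ∈ s, x = g}

/-- The ordered pairs `(a, b)` such that `a`, `b` and the `c` determined by `a * b * c = g` are
pairwise distinct: the first two entries of the orderings of the sets in `subsetsWithProd 3 g`. -/
def completablePairs (g : G) : Finset (G × G) :=
  {z ∈ univ.offDiag | g / (z.1 * z.2) ≠ z.1 ∧ g / (z.1 * z.2) ≠ z.2}

@[simp]
theorem mem_subsetsWithProd {n : ℕ} {g : G} {s : Finset G} :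
    s ∈ subsetsWithProd n g ↔ #s = n ∧ ∏ x ∈ s, x = g := by
  simp [subsetsWithProd]

@[simp]
theorem mem_completablePairs {g a b : G} :
    (a, b) ∈ completablePairs g ↔ a ≠ b ∧ g / (a * b) ≠ a ∧ g / (a * b) ≠ b := by
  simp [completablePairs]

theorem insert_div_mem_subsetsWithProd {g a b : G} (h : (a, b) ∈ completablePairs g) :
    {a, b, g / (a * b)} ∈ subsetsWithProd 3 g := by
  obtain ⟨hab, hca, hcb⟩ := mem_completablePairs.1 h
  refine mem_subsetsWithProd.2 ⟨card_eq_three.2 ⟨a, b, _, hab, hca.symm, hcb.symm, rfl⟩, ?_⟩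
  rw [prod_insert (by simp [hab, hca.symm]), prod_pair hcb.symm, ← mul_assoc, mul_div_cancel]

theorem mem_completablePairs_of_mem_offDiag {g a b : G} {s : Finset G}
    (hs : s ∈ subsetsWithProd 3 g) (hab : (a, b) ∈ s.offDiag) : (a, b) ∈ completablePairs g := by
  obtain ⟨hcard, rfl⟩ := mem_subsetsWithProd.1 hs
  have hmem : (∏ x ∈ s, x) / (a * b) ∈ (s.erase a).erase b := by
    rw [erase_erase_eq_singleton_div hcard hab]
    exact mem_singleton_self _
  obtain ⟨hcb, hca, -⟩ : _ ≠ b ∧ _ ≠ a ∧ _ ∈ s := by simpa only [mem_erase] using hmem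
  exact mem_completablePairs.2 ⟨(mem_offDiag.1 hab).2.2, hca, hcb⟩

theorem insert_div_eq_of_mem_offDiag {g a b : G} {s : Finset G}
    (hs : s ∈ subsetsWithProd 3 g) (hab : (a, b) ∈ s.offDiag) : {a, b, g / (a * b)} = s := by
  obtain ⟨hcard, rfl⟩ := mem_subsetsWithProd.1 hs
  obtain ⟨ha, hb, hne⟩ := mem_offDiag.1 hab
  rw [← erase_erase_eq_singleton_div hcard hab, insert_erase (mem_erase.2 ⟨hne.symm, hb⟩),
    insert_erase ha]

theorem card_completablePairs_eq_mul_six (g : G) :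
    #(completablePairs g) = #(subsetsWithProd 3 g) * 6 := by
  rw [card_eq_sum_card_fiberwise (f := fun z ↦ {z.1, z.2, g / (z.1 * z.2)})
    (t := subsetsWithProd 3 g) fun _ ↦ insert_div_mem_subsetsWithProd]
  refine sum_const_nat fun s hs ↦ ?_
  have hfiber : {z ∈ completablePairs g | {z.1, z.2, g / (z.1 * z.2)} = s} = s.offDiag := by
    ext ⟨a, b⟩
    rw [mem_filter]
    constructor
    · rintro ⟨hab, rfl⟩
      simp [(mem_completablePairs.1 hab).1]
    · intro hab
      exact ⟨mem_completablePairs_of_mem_offDiag hs hab, insert_div_eq_of_mem_offDiag hs hab⟩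
  rw [hfiber, offDiag_card, (mem_subsetsWithProd.1 hs).1]

theorem card_filter_offDiag_div_mul_eq_fst (g : G) :
    #{z ∈ (univ : Finset G).offDiag | g / (z.1 * z.2) = z.1} = #{x : G | x ^ 3 ≠ g} := by
  have hsnd (a b : G) : g / (a * b) = a ↔ g / a ^ 2 = b := by
    rw [div_eq_iff_eq_mul, div_eq_iff_eq_mul, sq, ← mul_assoc, mul_comm b]
  have hcube (a : G) : g / a ^ 2 = a ↔ a ^ 3 = g := by
    rw [div_eq_iff_eq_mul, pow_succ' a 2, eq_comm]
  refine card_nbij' Prod.fst (fun a ↦ (a, g / a ^ 2)) ?_ ?_ ?_ ?_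
  · rintro ⟨a, b⟩ h
    obtain ⟨hne, hb⟩ : a ≠ b ∧ g / a ^ 2 = b := by simpa [hsnd] using h
    simpa [← hcube, hb] using hne.symm
  · intro a ha
    have hne : g / a ^ 2 ≠ a := by simpa [← hcube] using ha
    simpa [hsnd] using hne.symm
  · rintro ⟨a, b⟩ h
    have hb : g / a ^ 2 = b := by simpa [hsnd] using (mem_filter.1 h).2
    simp [hb]
  · intro a _
    rfl

theorem card_filter_offDiag_div_mul_eq_snd (g : G) :
    #{z ∈ (univ : Finset G).offDiag | g / (z.1 * z.2) = z.2} = #{x : G | x ^ 3 ≠ g} := by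
  rw [← card_filter_offDiag_div_mul_eq_fst]
  refine card_equiv (Equiv.prodComm G G) fun z ↦ ?_
  simp [mul_comm z.1, ne_comm]

theorem card_completablePairs_add_two_mul (g : G) :
    #(completablePairs g) + 2 * #{x : G | x ^ 3 ≠ g} =
      Fintype.card G * (Fintype.card G - 1) := by
  have hdisj : Disjoint {z ∈ (univ : Finset G).offDiag | g / (z.1 * z.2) = z.1}
      {z ∈ (univ : Finset G).offDiag | g / (z.1 * z.2) = z.2} :=
    disjoint_filter.2 fun _ hz hfst hsnd ↦ (mem_offDiag.1 hz).2.2 (hfst.symm.trans hsnd)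
  have hsplit := card_filter_add_card_filter_not (s := (univ : Finset G).offDiag)
    (fun z ↦ g / (z.1 * z.2) = z.1 ∨ g / (z.1 * z.2) = z.2)
  rw [filter_or, card_union_of_disjoint hdisj, card_filter_offDiag_div_mul_eq_fst,
    card_filter_offDiag_div_mul_eq_snd, ← two_mul, offDiag_card, ← Nat.mul_sub_one,
    add_comm] at hsplit
  simpa only [completablePairs, ne_eq, not_or, card_univ] using hsplit

theorem card_subsetsWithProd_three (g : G) :
    #(subsetsWithProd 3 g) = (Nat.card G * (Nat.card G - 1) -
      2 * (Nat.card G - Nat.card {x : G // x ^ 3 = g})) / 6 := by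
  have hcubes : #{x : G | x ^ 3 = g} + #{x : G | x ^ 3 ≠ g} = Fintype.card G :=
    card_filter_add_card_filter_not _
  have hpairs := card_completablePairs_add_two_mul g
  rw [card_completablePairs_eq_mul_six] at hpairs
  rw [Nat.card_eq_fintype_card, Nat.card_eq_fintype_card, Fintype.card_subtype, ← hpairs, ← hcubes]
  omega

end SubsetsWithProd

section Polynomial

open Finset

variable {R : Type*} [CommRing R]

theorem coeff_zero_prod_X_sub_C (t : Finset R) :
    (∏ a ∈ t, (X - C a)).coeff 0 = (-1) ^ #t * ∏ a ∈ t, a := by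
  simp [coeff_zero_prod, prod_neg fun a : R ↦ a]

theorem exists_card_eq_three_prod_X_sub_C_iff {p : R[X]} :
    (∃ t : Finset R, #t = 3 ∧ p = ∏ a ∈ t, (X - C a)) ↔
      ∃ a b c : R, a ≠ b ∧ b ≠ c ∧ a ≠ c ∧ p = (X - C a) * (X - C b) * (X - C c) := by
  classical
  have hprod {a b c : R} (hab : a ≠ b) (hac : a ≠ c) (hbc : b ≠ c) :
      ∏ x ∈ {a, b, c}, (X - C x) = (X - C a) * (X - C b) * (X - C c) := by
    rw [prod_insert (by simp [hab, hac]), prod_pair hbc, mul_assoc]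
  constructor
  · rintro ⟨t, ht, rfl⟩
    obtain ⟨a, b, c, hab, hac, hbc, rfl⟩ := card_eq_three.1 ht
    exact ⟨a, b, c, hab, hbc, hac, hprod hab hac hbc⟩
  · rintro ⟨a, b, c, hab, hbc, hac, rfl⟩
    exact ⟨{a, b, c}, card_eq_three.2 ⟨a, b, c, hab, hac, hbc, rfl⟩, (hprod hab hac hbc).symm⟩

theorem exists_card_eq_prod_X_sub_C_and_coeff_zero_eq_iff [Fintype Rˣ] [DecidableEq Rˣ]
    {n : ℕ} {u : Rˣ} {p : R[X]} :
    ((∃ t : Finset R, #t = n ∧ p = ∏ a ∈ t, (X - C a)) ∧ p.coeff 0 = (-1) ^ n * u) ↔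
      ∃ s ∈ subsetsWithProd n u, ∏ a ∈ s, (X - C (a : R)) = p := by
  classical
  have hsign {v w : R} : (-1) ^ n * v = (-1) ^ n * w ↔ v = w :=
    (isUnit_one.neg.pow n).mul_right_inj
  have hcard (s : Finset Rˣ) : #(s.image Units.val) = #s :=
    card_image_of_injective s Units.val_injective
  have hprod {M : Type _} [CommMonoid M] (s : Finset Rˣ) (f : R → M) :
      ∏ a ∈ s.image Units.val, f a = ∏ a ∈ s, f a :=
    prod_image Units.val_injective.injOn
  constructor
  · rintro ⟨⟨t, ht, rfl⟩, hcoeff⟩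
    rw [coeff_zero_prod_X_sub_C, ht, hsign] at hcoeff
    lift t to Finset Rˣ using IsUnit.prod_iff.1 (hcoeff ▸ u.isUnit)
    rw [hprod, ← Units.coe_prod, Units.val_inj] at hcoeff
    exact ⟨t, mem_subsetsWithProd.2 ⟨hcard t ▸ ht, hcoeff⟩, (hprod t fun a ↦ X - C a).symm⟩
  · rintro ⟨s, hs, rfl⟩
    obtain ⟨rfl, rfl⟩ := mem_subsetsWithProd.1 hs
    rw [← hprod s fun a ↦ X - C a]
    refine ⟨⟨s.image Units.val, hcard s, rfl⟩, ?_⟩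
    rw [coeff_zero_prod_X_sub_C, hcard, hprod, Units.coe_prod]

theorem prod_X_sub_C_injective [IsDomain R] {ι : Type*} {f : ι → R} (hf : Function.Injective f) :
    Function.Injective fun s : Finset ι ↦ ∏ i ∈ s, (X - C (f i)) := by
  intro s t hst
  have hroots (s : Finset ι) : (∏ i ∈ s, (X - C (f i))).roots = s.val.map f := by
    simpa using roots_prod_X_sub_C (s.map ⟨f, hf⟩)
  have hmap : s.val.map f = t.val.map f := by
    rw [← hroots, ← hroots]
    exact congrArg roots hst
  exact val_injective (Multiset.map_injective hf hmap)

theorem card_prod_X_sub_C_coeff_zero_eq [IsDomain R] [Fintype Rˣ] [DecidableEq Rˣ]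
    (n : ℕ) (u : Rˣ) :
    Nat.card {p : R[X] // (∃ t : Finset R, #t = n ∧ p = ∏ a ∈ t, (X - C a)) ∧
      p.coeff 0 = (-1) ^ n * u} = #(subsetsWithProd n u) := by
  classical
  rw [← card_image_of_injective _ (prod_X_sub_C_injective Units.val_injective),
    ← Nat.card_eq_finsetCard]
  refine Nat.card_congr (Equiv.subtypeEquivRight fun p ↦ ?_)
  rw [mem_image, exists_card_eq_prod_X_sub_C_and_coeff_zero_eq_iff]

end Polynomial

theorem count_distinct_split_cubics_general (R : Type*) [CommRing R] [IsDomain R] [Finite Rˣ]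
    (u : Rˣ) :
    Nat.card {p : R[X] //
        (∃ a b c : R, a ≠ b ∧ b ≠ c ∧ a ≠ c ∧
          p = (X - C a) * (X - C b) * (X - C c)) ∧ p.coeff 0 = -u} =
      (Nat.card Rˣ * (Nat.card Rˣ - 1) -
        2 * (Nat.card Rˣ - Nat.card {x : Rˣ // x ^ 3 = u})) / 6 := by
  classical
  cases nonempty_fintype Rˣ
  have hsign : -(u : R) = (-1) ^ 3 * u := by ring
  simp only [← exists_card_eq_three_prod_X_sub_C_iff, hsign]
  rw [card_prod_X_sub_C_coeff_zero_eq, card_subsetsWithProd_three]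

theorem count_distinct_split_cubics (F : Type*) [Field F] [Fintype F] :
    Nat.card {p : Polynomial F //
        (∃ a b c : F, a ≠ b ∧ b ≠ c ∧ a ≠ c ∧
          p = (X - C a) * (X - C b) * (X - C c)) ∧ p.coeff 0 = -1} =
      ((Fintype.card F - 1) * (Fintype.card F - 2) -
        2 * ((Fintype.card F - 1) - Nat.gcd 3 (Fintype.card F - 1))) / 6 := by
  have hcard : Nat.card Fˣ = Fintype.card F - 1 := by rw [Nat.card_units, Nat.card_eq_fintype_card]
  simpa only [card_pow_eq_one_eq_gcd, hcard, Nat.sub_sub, Units.val_one] using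
    count_distinct_split_cubics_general F 1
end

section
/- The number of monic degree-three polynomials over F_q with constant term -1 that have exactly one root in F_q equals (q^2 - q)/2. -/
open Polynomial

/-!
Over a field, a monic polynomial with exactly one root is a monic rootless polynomial `g` times a
linear factor. Since `g` does not vanish at `0`, the linear factor is determined by `g` and the
constant term of the product, so prescribing that constant term leaves a bijection with the choices
of `g`. A quadratic either splits or is rootless, and the split monic ones correspond to unordered
pairs of roots; this leaves `q ^ 2 - (q + 1).choose 2 = q.choose 2` rootless ones.
-/

section MonicCounts

theorem natCard_monic_natDegree_eq (R : Type*) [Ring R] [Nontrivial R] (n : ℕ) :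
    Nat.card {p : R[X] // p.Monic ∧ p.natDegree = n} = Nat.card R ^ n := by
  rw [Nat.card_congr ((monicEquivDegreeLT n).trans (degreeLTEquiv R n).toEquiv), Nat.card_fun,
    Nat.card_fin]

/-- The correspondence between split monic polynomials of degree `n` and multisets of `n` roots,
used to count the former. -/
noncomputable def monicSplitsEquivSym (R : Type*) [CommRing R] [IsDomain R] (n : ℕ) :
    {p : R[X] // (p.Monic ∧ p.natDegree = n) ∧ p.Splits} ≃ Sym R n where
  toFun p := ⟨p.1.roots, p.2.2.natDegree_eq_card_roots.symm.trans p.2.1.2⟩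
  invFun s := ⟨(s.1.map (X - C ·)).prod,
    ⟨monic_multisetProd_X_sub_C s.1, (natDegree_multiset_prod_X_sub_C_eq_card s.1).trans s.2⟩,
    .multisetProd (Multiset.forall_mem_map_iff.2 fun r _ => .X_sub_C r)⟩
  left_inv p := Subtype.ext (p.2.2.eq_prod_roots_of_monic p.2.1.1).symm
  right_inv s := Subtype.ext (roots_multiset_prod_X_sub_C s.1)

theorem natCard_monic_splits (R : Type*) [CommRing R] [IsDomain R] (n : ℕ) :
    Nat.card {p : R[X] // (p.Monic ∧ p.natDegree = n) ∧ p.Splits} =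
      (Nat.card R).multichoose n := by
  rw [Nat.card_congr (monicSplitsEquivSym R n), Sym.natCard_sym_eq_multichoose]

theorem not_splits_iff_roots_eq_zero_of_natDegree_eq_two {F : Type*} [Field F] {p : F[X]}
    (hp : p.natDegree = 2) : ¬ p.Splits ↔ p.roots = 0 := by
  refine ⟨fun hsplit => Multiset.eq_zero_of_forall_notMem fun r hr => hsplit ?_,
    fun hroots hsplit => hsplit.roots_ne_zero (by simp [hp]) hroots⟩
  exact .of_natDegree_eq_two hp (isRoot_of_mem_roots hr)

theorem multichoose_two_add_choose_two (n : ℕ) : n.multichoose 2 + n.choose 2 = n ^ 2 := by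
  induction n with
  | zero => simp
  | succ n ih =>
    rw [Nat.multichoose_succ_succ, Nat.multichoose_one_right, Nat.choose_succ_succ',
      Nat.choose_one_right]
    linarith

theorem natCard_monic_quadratic_roots_eq_zero (F : Type*) [Field F] [Finite F] :
    Nat.card {p : F[X] // p.Monic ∧ p.natDegree = 2 ∧ p.roots = 0} = (Nat.card F).choose 2 := by
  classical
  let Quadratic := {p : F[X] // p.Monic ∧ p.natDegree = 2}
  have : Finite Quadratic := Nat.finite_of_card_ne_zero <| by
    rw [natCard_monic_natDegree_eq]; exact pow_ne_zero 2 Nat.card_pos.ne'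
  have hsplit : Nat.card {p : Quadratic // p.1.Splits} = (Nat.card F).multichoose 2 := by
    rw [← natCard_monic_splits]
    exact Nat.card_congr (Equiv.subtypeSubtypeEquivSubtypeInter _ _)
  have hrootless : Nat.card {p : Quadratic // ¬ p.1.Splits} =
      Nat.card {p : F[X] // p.Monic ∧ p.natDegree = 2 ∧ p.roots = 0} := by
    refine Nat.card_congr ((Equiv.subtypeSubtypeEquivSubtypeInter _ (¬ Splits ·)).trans
      (Equiv.subtypeEquivRight fun p => ?_))
    rw [and_assoc]
    exact and_congr_right fun _ => and_congr_right not_splits_iff_roots_eq_zero_of_natDegree_eq_two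
  have hsum : Nat.card {p : Quadratic // p.1.Splits} + Nat.card {p : Quadratic // ¬ p.1.Splits} =
      Nat.card F ^ 2 := by
    rw [← Nat.card_sum, Nat.card_congr (Equiv.sumCompl _), natCard_monic_natDegree_eq]
  rw [hsplit, hrootless, ← multichoose_two_add_choose_two] at hsum
  exact Nat.add_left_cancel hsum

end MonicCounts

section OneRoot

variable {F : Type*} [Field F]

/-- The multiple of `g` by the monic linear factor that makes its constant term `a`. This is only
meaningful when `g.coeff 0 ≠ 0`; otherwise the factor is `X` and the constant term is `0`. -/
noncomputable def mulLinearWithCoeffZero (a : F) (g : F[X]) : F[X] :=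
  g * (X + C (a / g.coeff 0))

theorem roots_mulLinearWithCoeffZero (a : F) {g : F[X]} (hg : g ≠ 0) :
    (mulLinearWithCoeffZero a g).roots = g.roots + {-(a / g.coeff 0)} := by
  rw [mulLinearWithCoeffZero, roots_mul (mul_ne_zero hg (X_add_C_ne_zero _)), roots_X_add_C]

theorem coeff_zero_mulLinearWithCoeffZero (a : F) {g : F[X]} (hg : g.coeff 0 ≠ 0) :
    (mulLinearWithCoeffZero a g).coeff 0 = a := by
  simp [mulLinearWithCoeffZero, mul_coeff_zero, mul_div_cancel₀ a hg]

theorem coeff_zero_ne_zero_of_roots_eq_zero {R : Type*} [CommRing R] [IsDomain R] {g : R[X]}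
    (hg : g ≠ 0) (hroots : g.roots = 0) : g.coeff 0 ≠ 0 := fun h0 => by
  have hmem : (0 : R) ∈ g.roots := (mem_roots hg).2 (zero_isRoot_of_coeff_zero_eq_zero h0)
  simp [hroots] at hmem

theorem injOn_mulLinearWithCoeffZero (a : F) :
    Set.InjOn (mulLinearWithCoeffZero a) {g | g ≠ 0 ∧ g.roots = 0} := by
  rintro g ⟨hg, hgroots⟩ h ⟨hh, hhroots⟩ hgh
  have hroot : a / g.coeff 0 = a / h.coeff 0 := by
    simpa [roots_mulLinearWithCoeffZero, hg, hh, hgroots, hhroots] using congrArg roots hgh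
  rw [mulLinearWithCoeffZero, mulLinearWithCoeffZero, hroot] at hgh
  exact mul_right_cancel₀ (X_add_C_ne_zero _) hgh

theorem exists_mulLinearWithCoeffZero_eq {p : F[X]} (hp : p.Monic)
    (hroots : p.roots.card = 1) :
    ∃ g : F[X], g.Monic ∧ g.natDegree + 1 = p.natDegree ∧ g.roots = 0 ∧
      mulLinearWithCoeffZero (p.coeff 0) g = p := by
  obtain ⟨g, hgp, hdeg, hgroots⟩ := exists_prod_multiset_X_sub_C_mul p
  obtain ⟨r, hr⟩ := Multiset.card_eq_one.1 hroots
  replace hgp : (X - C r) * g = p := by simpa [hr] using hgp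
  have hg : g.Monic := (monic_X_sub_C r).of_mul_monic_left (hgp ▸ hp)
  have hg0 : g.coeff 0 ≠ 0 := coeff_zero_ne_zero_of_roots_eq_zero hg.ne_zero hgroots
  have hlinear : p.coeff 0 / g.coeff 0 = -r := by
    rw [← hgp, mul_coeff_zero, mul_div_cancel_right₀ _ hg0]
    simp
  refine ⟨g, hg, by omega, hgroots, ?_⟩
  rw [mulLinearWithCoeffZero, hlinear, C_neg, ← sub_eq_add_neg, mul_comm, hgp]

theorem bijOn_mulLinearWithCoeffZero (a : F) (n : ℕ) :
    Set.BijOn (mulLinearWithCoeffZero a)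
      {g | g.Monic ∧ g.natDegree = n ∧ g.roots = 0}
      {p | p.Monic ∧ p.natDegree = n + 1 ∧ p.coeff 0 = a ∧ p.roots.card = 1} := by
  refine ⟨?mapsTo, ?injOn, ?surjOn⟩
  case mapsTo =>
    rintro g ⟨hg, hdeg, hroots⟩
    refine ⟨hg.mul (monic_X_add_C _), ?_, ?_, ?_⟩
    · rw [mulLinearWithCoeffZero, hg.natDegree_mul (monic_X_add_C _), hdeg, natDegree_X_add_C]
    · exact coeff_zero_mulLinearWithCoeffZero a
        (coeff_zero_ne_zero_of_roots_eq_zero hg.ne_zero hroots)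
    · rw [roots_mulLinearWithCoeffZero a hg.ne_zero, hroots, zero_add, Multiset.card_singleton]
  case injOn =>
    refine (injOn_mulLinearWithCoeffZero a).mono ?_
    rintro g ⟨hg, -, hroots⟩
    exact ⟨hg.ne_zero, hroots⟩
  case surjOn =>
    rintro p ⟨hp, hdeg, rfl, hroots⟩
    obtain ⟨g, hg, hgdeg, hgroots, hgp⟩ := exists_mulLinearWithCoeffZero_eq hp hroots
    exact ⟨g, ⟨hg, by omega, hgroots⟩, hgp⟩

end OneRoot

theorem count_exactly_one_root_cubics_general (F : Type*) [Field F] [Fintype F] (a : F) :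
    Nat.card {p : F[X] // p.Monic ∧ p.natDegree = 3 ∧ p.coeff 0 = a ∧
        Multiset.card p.roots = 1} =
      (Fintype.card F ^ 2 - Fintype.card F) / 2 :=
  calc
    _ = Nat.card {g : F[X] // g.Monic ∧ g.natDegree = 2 ∧ g.roots = 0} :=
      (Nat.card_congr (bijOn_mulLinearWithCoeffZero a 2).equiv).symm
    _ = (Fintype.card F).choose 2 := by
      rw [natCard_monic_quadratic_roots_eq_zero, Nat.card_eq_fintype_card]
    _ = (Fintype.card F ^ 2 - Fintype.card F) / 2 := by
      rw [Nat.choose_two_right, Nat.mul_sub_one, sq]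

theorem count_exactly_one_root_cubics (F : Type*) [Field F] [Fintype F] :
    Nat.card {p : Polynomial F // p.Monic ∧ p.natDegree = 3 ∧ p.coeff 0 = -1 ∧
        Multiset.card p.roots = 1} =
      (Fintype.card F ^ 2 - Fintype.card F) / 2 :=
  count_exactly_one_root_cubics_general F (-1)
end
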